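/- Let λ ≥ 2 be an integer and let X be a λ-normed plane. Then the Fermat–Torricelli set ft(x₁, x₂, x₃) is a singleton for every triple of points x₁, x₂, x₃ ∈ X if and only if λ is not divisible by 3. -/

import Mathlib

open Real

/-- The vertices of a regular 2λ-gon centered at the origin, with circumradius r and
initial angle θ. -/
noncomputable def polyVerts (lam : ℕ) (r θ : ℝ) : Fin (2 * lam) → ℝ × ℝ :=
  fun k => (r * Real.cos (θ + (k : ℕ) * π / lam), r * Real.sin (θ + (k : ℕ) * π / lam))

/-- N : ℝ² → ℝ is a norm. -/
def IsNormOn (N : ℝ × ℝ → ℝ) : Prop :=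
  (∀ x y : ℝ × ℝ, N (x + y) ≤ N x + N y) ∧
  (∀ (c : ℝ) (x : ℝ × ℝ), N (c • x) = |c| * N x) ∧
  (∀ x : ℝ × ℝ, N x = 0 → x = 0)

/-- N is a λ-plane norm: a norm on ℝ² whose closed unit ball is a regular 2λ-gon
centered at the origin. -/
def IsLambdaNorm (lam : ℕ) (N : ℝ × ℝ → ℝ) : Prop :=
  IsNormOn N ∧ ∃ r > (0 : ℝ), ∃ θ : ℝ,
    {x : ℝ × ℝ | N x ≤ 1} = convexHull ℝ (Set.range (polyVerts lam r θ))

/-- φ is a norming functional for x with respect to the norm N: the dual norm of φ is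
at most one (‖φ‖ ≤ 1, which together with φ x = N x = 1 for the unit vectors considered
gives ‖φ‖ = 1) and φ x = N x. -/
def IsNormingN (N : ℝ × ℝ → ℝ) (φ : (ℝ × ℝ) →ₗ[ℝ] ℝ) (x : ℝ × ℝ) : Prop :=
  (∀ y : ℝ × ℝ, |φ y| ≤ N y) ∧ φ x = N x

/-- A unit vector (w.r.t. N) of the first type: an interior point of a flattening of the
unit circle of N. -/
def FirstTypeN (N : ℝ × ℝ → ℝ) (x : ℝ × ℝ) : Prop :=
  N x = 1 ∧ ∃ u v : ℝ × ℝ, u ≠ v ∧ N u = 1 ∧ N v = 1 ∧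
    x ∈ openSegment ℝ u v ∧ ∀ z ∈ segment ℝ u v, N z = 1

/-- A unit vector (w.r.t. N) of the zero type: not of the first type. -/
def ZeroTypeN (N : ℝ × ℝ → ℝ) (x : ℝ × ℝ) : Prop :=
  N x = 1 ∧ ¬ FirstTypeN N x

/-- The Fermat–Torricelli set of a finite tuple of points of ℝ² with respect to the
norm N. -/
def ftSetN (N : ℝ × ℝ → ℝ) {n : ℕ} (x : Fin n → ℝ × ℝ) : Set (ℝ × ℝ) :=
  {p | ∀ q : ℝ × ℝ, ∑ i, N (p - x i) ≤ ∑ i, N (q - x i)}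

/-!
By the Hahn–Banach theorem, `p` minimises `∑ i, N (p - x i)` if and only if there are functionals
`φ i` of dual norm at most one, with sum zero, such that `φ i` norms `p - x i`; these functionals
then norm `q - x i` for every other minimiser `q` as well. If there are two minimisers, each `φ i`
is therefore either a vertex of the dual unit ball, which norms the whole cone over a side of the
unit ball, or it norms `p - q` up to sign, in which case `p - q` points to a vertex of the unit
ball and `φ i` lies on one of the two sides of the dual ball perpendicular to it. The dual ball is
again a regular 2λ-gon, and three such points of it have sum zero only if 3 divides λ. Conversely,
if 3 divides λ, then three dual vertices at mutual angles 2π/3 have sum zero, and since each of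
them norms a two-dimensional cone, there is room for two minimisers.
-/

/-! ### Minimisers and norming functionals -/

section HahnBanach

variable {V ι : Type*} [AddCommGroup V] [Module ℝ V] [Fintype ι]

theorem exists_le_sublinear_of_forall_le_add {P : V → ℝ}
    (P_hom : ∀ c : ℝ, 0 < c → ∀ x, P (c • x) = c * P x)
    (P_add : ∀ x y, P (x + y) ≤ P x + P y) (D : Submodule ℝ V) (y : V)
    (hy : ∀ d ∈ D, P y ≤ P (y + d)) :
    ∃ g : V →ₗ[ℝ] ℝ, (∀ x, g x ≤ P x) ∧ g y = P y ∧ ∀ d ∈ D, g d = 0 := by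
  have nonneg_on : ∀ d ∈ D, 0 ≤ P d := fun d hd => by linarith [hy d hd, P_add y d]
  by_cases hyD : y ∈ D
  · obtain ⟨g, g_ext, g_le⟩ := exists_extension_of_le_sublinear ⟨D, 0⟩ P P_hom P_add
      fun d => nonneg_on d d.2
    have P_zero : P 0 = 0 := by grind [P_hom 2 (by norm_num) 0, smul_zero]
    have P_y : P y ≤ 0 := by simpa [P_zero] using hy (-y) (D.neg_mem hyD)
    exact ⟨g, g_le, (g_ext ⟨y, hyD⟩).trans (P_y.antisymm (nonneg_on y hyD)).symm,
      fun d hd => g_ext ⟨d, hd⟩⟩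
  · obtain ⟨g, g_ext, g_le⟩ := exists_extension_of_le_sublinear
      (LinearPMap.supSpanSingleton ⟨D, 0⟩ y (P y) hyD) P P_hom P_add <| by
        rintro ⟨_, hx⟩
        obtain ⟨d, hd, _, hty, rfl⟩ := Submodule.mem_sup.1 hx
        obtain ⟨t, rfl⟩ := Submodule.mem_span_singleton.1 hty
        rw [LinearPMap.supSpanSingleton_apply_mk _ _ _ hyD d hd t]
        suffices t * P y ≤ P (d + t • y) by simpa using this
        rcases lt_trichotomy t 0 with ht | rfl | ht
        · have cancel : P d ≤ P (d + t • y) + P ((-t) • y) := by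
            simpa [add_assoc, ← add_smul] using P_add (d + t • y) ((-t) • y)
          rw [P_hom (-t) (by linarith)] at cancel
          linarith [nonneg_on d hd]
        · simpa using nonneg_on d hd
        · have scaled : P (d + t • y) = t * P (y + t⁻¹ • d) := by
            rw [← P_hom t ht, smul_add, smul_inv_smul₀ ht.ne', add_comm]
          rw [scaled]
          exact mul_le_mul_of_nonneg_left (hy _ (D.smul_mem _ hd)) ht.le
    refine ⟨g, g_le, ?_, fun d hd => ?_⟩
    · exact (g_ext ⟨y, Submodule.mem_sup_right (Submodule.mem_span_singleton_self y)⟩).trans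
        (LinearPMap.supSpanSingleton_apply_self _ _ hyD)
    · simpa using (g_ext ⟨d, Submodule.mem_sup_left hd⟩).trans
        (LinearPMap.supSpanSingleton_apply_mk_of_mem _ _ hyD hd)

/-- Hahn–Banach applied to `z ↦ ∑ i, N (z i)` and the diagonal of `ι → V`. -/
theorem exists_sum_eq_zero_of_forall_sum_le {N : V → ℝ}
    (N_hom : ∀ c : ℝ, 0 < c → ∀ x, N (c • x) = c * N x)
    (N_add : ∀ x y, N (x + y) ≤ N x + N y) (x : ι → V) (p : V)
    (hp : ∀ q, ∑ i, N (p - x i) ≤ ∑ i, N (q - x i)) :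
    ∃ φ : ι → V →ₗ[ℝ] ℝ, ∑ i, φ i = 0 ∧
      ∀ i, (∀ y, φ i y ≤ N y) ∧ φ i (p - x i) = N (p - x i) := by
  classical
  obtain ⟨g, g_le, g_eq, g_diag⟩ := exists_le_sublinear_of_forall_le_add
    (P := fun z : ι → V => ∑ i, N (z i)) (y := fun i => p - x i)
    (fun c hc z => by simp only [Pi.smul_apply, N_hom c hc, Finset.mul_sum])
    (fun z w => by simpa only [Pi.add_apply, ← Finset.sum_add_distrib] using
      Finset.sum_le_sum fun i _ => N_add (z i) (w i))
    (LinearMap.range (LinearMap.pi fun _ : ι => (LinearMap.id : V →ₗ[ℝ] V)))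
    (by
      rintro _ ⟨q, rfl⟩
      simpa [sub_add_eq_add_sub] using hp (p + q))
  have g_single (z : ι → V) : ∑ i, g (Pi.single i (z i)) = g z := by
    rw [← map_sum, Finset.univ_sum_single]
  have le_N (i : ι) (y : V) : g (Pi.single i y) ≤ N y := by
    have N_zero : N 0 = 0 := by grind [N_hom 2 (by norm_num) 0, smul_zero]
    refine (g_le _).trans_eq ?_
    rw [Fintype.sum_eq_single i fun j hj => by rw [Pi.single_eq_of_ne hj, N_zero],
      Pi.single_eq_same]
  have sum_eq : ∑ i, g (Pi.single i (p - x i)) = ∑ i, N (p - x i) :=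
    (g_single fun i => p - x i).trans g_eq
  refine ⟨fun i => g ∘ₗ LinearMap.single ℝ (fun _ => V) i, ?_, fun i => ⟨le_N i, ?_⟩⟩
  · ext y
    simpa using (g_single fun _ => y).trans (g_diag _ ⟨y, rfl⟩)
  · exact (Finset.sum_eq_sum_iff_of_le fun i _ => le_N i _).1 sum_eq i (Finset.mem_univ i)

end HahnBanach

open Filter in
lemma exists_forall_sum_norm_sub_le {V ι : Type*} [SeminormedAddCommGroup V] [ProperSpace V]
    [Fintype ι] [Nonempty ι] (x : ι → V) :
    ∃ p, ∀ q, ∑ i, ‖p - x i‖ ≤ ∑ i, ‖q - x i‖ := by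
  have hcont : Continuous fun q => ∑ i, ‖q - x i‖ := by fun_prop
  obtain ⟨i₀⟩ := ‹Nonempty ι›
  refine hcont.exists_forall_le <| tendsto_atTop_mono
    (fun q => (norm_sub_norm_le q (x i₀)).trans ?_)
    (tendsto_atTop_add_const_right _ (-‖x i₀‖) tendsto_norm_cocompact_atTop)
  exact Finset.single_le_sum (f := fun i => ‖q - x i‖) (fun i _ => norm_nonneg _)
    (Finset.mem_univ i₀)

lemma exists_forall_sum_norm_sub_le_of_core {V ι : Type*} [AddCommGroup V] [Module ℝ V]
    [FiniteDimensional ℝ V] [Norm V] (core : NormedSpace.Core ℝ V)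
    [Fintype ι] [Nonempty ι] (x : ι → V) :
    ∃ p, ∀ q, ∑ i, ‖p - x i‖ ≤ ∑ i, ‖q - x i‖ := by
  let _ : NormedAddCommGroup V := .ofCore core
  let _ : NormedSpace ℝ V := .ofCore core
  have : ProperSpace V := FiniteDimensional.proper ℝ V
  exact exists_forall_sum_norm_sub_le x

namespace IsNormOn

variable {N : ℝ × ℝ → ℝ} {n : ℕ}

lemma nonneg (hN : IsNormOn N) (x : ℝ × ℝ) : 0 ≤ N x :=
  apply_nonneg (Seminorm.of N hN.1 hN.2.1) x

lemma map_zero (hN : IsNormOn N) : N 0 = 0 :=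
  _root_.map_zero (Seminorm.of N hN.1 hN.2.1)

lemma map_neg (hN : IsNormOn N) (x : ℝ × ℝ) : N (-x) = N x :=
  map_neg_eq_map (Seminorm.of N hN.1 hN.2.1) x

lemma map_smul_of_pos (hN : IsNormOn N) (c : ℝ) (hc : 0 < c) (x : ℝ × ℝ) :
    N (c • x) = c * N x := by
  rw [hN.2.1, abs_of_pos hc]

lemma isNormingN_of_le (hN : IsNormOn N) {φ : (ℝ × ℝ) →ₗ[ℝ] ℝ} {x : ℝ × ℝ}
    (hφ : ∀ y, φ y ≤ N y) (hx : φ x = N x) : IsNormingN N φ x :=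
  ⟨fun y => abs_le'.2 ⟨hφ y, by simpa [hN.map_neg] using hφ (-y)⟩, hx⟩

theorem ftSetN_nonempty [NeZero n] (hN : IsNormOn N) (x : Fin n → ℝ × ℝ) :
    (ftSetN N x).Nonempty := by
  let norm : Norm (ℝ × ℝ) := ⟨N⟩
  exact exists_forall_sum_norm_sub_le_of_core (V := ℝ × ℝ)
    { norm_nonneg := hN.nonneg
      norm_smul := hN.2.1
      norm_triangle := hN.1
      norm_eq_zero_iff := fun y => ⟨hN.2.2 y, fun hy => hy ▸ hN.map_zero⟩ } x

theorem exists_isNormingN_of_mem_ftSetN (hN : IsNormOn N) {x : Fin n → ℝ × ℝ} {p : ℝ × ℝ}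
    (hp : p ∈ ftSetN N x) :
    ∃ φ : Fin n → (ℝ × ℝ) →ₗ[ℝ] ℝ, ∑ i, φ i = 0 ∧ ∀ i, IsNormingN N (φ i) (p - x i) := by
  obtain ⟨φ, hsum, hφ⟩ := exists_sum_eq_zero_of_forall_sum_le hN.map_smul_of_pos hN.1 x p hp
  exact ⟨φ, hsum, fun i => hN.isNormingN_of_le (hφ i).1 (hφ i).2⟩

end IsNormOn

namespace IsNormingN

variable {N : ℝ × ℝ → ℝ} {n : ℕ} {x : Fin n → ℝ × ℝ} {φ : Fin n → (ℝ × ℝ) →ₗ[ℝ] ℝ}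
  {p q : ℝ × ℝ}

lemma apply_le {ψ : (ℝ × ℝ) →ₗ[ℝ] ℝ} (hψ : IsNormingN N ψ p) (y : ℝ × ℝ) : ψ y ≤ N y :=
  (le_abs_self _).trans (hψ.1 y)

lemma sum_apply_sub_eq (hsum : ∑ i, φ i = 0) (p q : ℝ × ℝ) :
    ∑ i, φ i (p - x i) = ∑ i, φ i (q - x i) := by
  have sum_apply (y : ℝ × ℝ) : ∑ i, φ i y = 0 := by simpa using LinearMap.congr_fun hsum y
  simp only [map_sub, Finset.sum_sub_distrib, sum_apply]

theorem mem_ftSetN (hsum : ∑ i, φ i = 0) (hp : ∀ i, IsNormingN N (φ i) (p - x i)) :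
    p ∈ ftSetN N x := fun q =>
  calc ∑ i, N (p - x i) = ∑ i, φ i (p - x i) := Finset.sum_congr rfl fun i _ => (hp i).2.symm
    _ = ∑ i, φ i (q - x i) := sum_apply_sub_eq hsum p q
    _ ≤ ∑ i, N (q - x i) := Finset.sum_le_sum fun i _ => (hp i).apply_le _

theorem of_mem_ftSetN (hsum : ∑ i, φ i = 0) (hp : ∀ i, IsNormingN N (φ i) (p - x i))
    (hq : q ∈ ftSetN N x) (i : Fin n) : IsNormingN N (φ i) (q - x i) := by
  have le_N (j : Fin n) : φ j (q - x j) ≤ N (q - x j) := (hp j).apply_le _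
  have sum_eq : ∑ j, φ j (q - x j) = ∑ j, N (q - x j) := by
    refine (Finset.sum_le_sum fun j _ => le_N j).antisymm ?_
    calc ∑ j, N (q - x j) ≤ ∑ j, N (p - x j) := hq p
      _ = ∑ j, φ j (p - x j) := Finset.sum_congr rfl fun j _ => (hp j).2.symm
      _ = ∑ j, φ j (q - x j) := sum_apply_sub_eq hsum p q
  exact ⟨(hp i).1, (Finset.sum_eq_sum_iff_of_le fun j _ => le_N j).1 sum_eq i (Finset.mem_univ i)⟩

end IsNormingN

/-! ### Trigonometry of the angle `π / (2 * lam)` -/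

/-- Half the central angle of a side of a regular `2 * lam`-gon. -/
noncomputable def halfAngle (lam : ℕ) : ℝ := π / (2 * lam)

section HalfAngle

variable {lam : ℕ}

lemma two_mul_mul_halfAngle (hlam : 0 < lam) : 2 * lam * halfAngle lam = π := by
  unfold halfAngle
  field_simp

lemma halfAngle_pos (hlam : 0 < lam) : 0 < halfAngle lam := by
  unfold halfAngle
  positivity

lemma halfAngle_le_pi_div_four (hlam : 2 ≤ lam) : halfAngle lam ≤ π / 4 := by
  have hlam' : (2 : ℝ) ≤ lam := by exact_mod_cast hlam
  exact div_le_div_of_nonneg_left pi_nonneg (by norm_num) (by linarith)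

lemma sin_halfAngle_pos (hlam : 0 < lam) : 0 < sin (halfAngle lam) := by
  refine sin_pos_of_pos_of_lt_pi (halfAngle_pos hlam) ?_
  have hlam' : (1 : ℝ) ≤ lam := by exact_mod_cast hlam
  nlinarith [two_mul_mul_halfAngle hlam, halfAngle_pos hlam]

lemma cos_halfAngle_pos (hlam : 2 ≤ lam) : 0 < cos (halfAngle lam) :=
  cos_pos_of_mem_Ioo ⟨by linarith [pi_pos, halfAngle_pos (by lia : 0 < lam)],
    by linarith [pi_pos, halfAngle_le_pi_div_four hlam]⟩

lemma half_le_cos_sq_halfAngle (hlam : 2 ≤ lam) : 1 / 2 ≤ cos (halfAngle lam) ^ 2 := by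
  have cos_two_mul_nonneg : 0 ≤ cos (2 * halfAngle lam) :=
    cos_nonneg_of_mem_Icc ⟨by linarith [pi_pos, halfAngle_pos (by lia : 0 < lam)],
      by linarith [halfAngle_le_pi_div_four hlam]⟩
  linarith [cos_sq (halfAngle lam)]

lemma sin_two_mul_halfAngle_pos (hlam : 2 ≤ lam) : 0 < sin (2 * halfAngle lam) := by
  have sin_pos : 0 < sin (halfAngle lam) := sin_halfAngle_pos (by lia)
  have cos_pos := cos_halfAngle_pos hlam
  rw [sin_two_mul]
  positivity

lemma sin_int_mul_halfAngle_eq_zero_iff (hlam : 0 < lam) {n : ℤ} :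
    sin (n * halfAngle lam) = 0 ↔ 2 * (lam : ℤ) ∣ n := by
  have angle_eq (m : ℤ) : (m : ℝ) * π = (m * (2 * lam) : ℤ) * halfAngle lam := by
    push_cast
    rw [mul_assoc (m : ℝ), two_mul_mul_halfAngle hlam]
  simp only [sin_eq_zero_iff, angle_eq, mul_left_inj' (halfAngle_pos hlam).ne', Int.cast_inj]
  exact ⟨fun ⟨m, hm⟩ => ⟨m, by rw [← hm, mul_comm]⟩, fun ⟨m, hm⟩ => ⟨m, by rw [hm, mul_comm]⟩⟩

lemma sin_sq_emod_mul_halfAngle (hlam : 0 < lam) (n : ℤ) :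
    sin ((n % (2 * lam) : ℤ) * halfAngle lam) ^ 2 = sin (n * halfAngle lam) ^ 2 := by
  have angle_eq : 2 * ((n : ℝ) * halfAngle lam) =
      2 * ((n % (2 * lam) : ℤ) * halfAngle lam) + (n / (2 * lam) : ℤ) * (2 * π) := by
    conv_lhs => rw [← Int.emod_add_mul_ediv n (2 * lam)]
    push_cast
    linear_combination 2 * ((n / (2 * lam) : ℤ) : ℝ) * two_mul_mul_halfAngle hlam
  rw [sin_sq_eq_half_sub, sin_sq_eq_half_sub, angle_eq, cos_add_int_mul_two_pi]

lemma sin_sq_halfAngle_le (hlam : 0 < lam) {n : ℤ} (hn : sin (n * halfAngle lam) ≠ 0) :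
    sin (halfAngle lam) ^ 2 ≤ sin (n * halfAngle lam) ^ 2 := by
  have hb := halfAngle_pos hlam
  rw [← sin_sq_emod_mul_halfAngle hlam]
  rw [Ne, sin_int_mul_halfAngle_eq_zero_iff hlam, Int.dvd_iff_emod_eq_zero] at hn
  set m := n % (2 * lam)
  have m_pos : (1 : ℝ) ≤ m := by
    exact_mod_cast (Int.emod_nonneg n (by lia)).lt_of_ne' hn
  have m_lt : (m : ℝ) + 1 ≤ 2 * lam := by exact_mod_cast Int.emod_lt_of_pos n (by lia)
  have upper : (m + 1) * halfAngle lam ≤ π := by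
    simpa only [two_mul_mul_halfAngle hlam] using mul_le_mul_of_nonneg_right m_lt hb.le
  have product_nonneg : 0 ≤ sin ((m - 1) * halfAngle lam) * sin ((m + 1) * halfAngle lam) :=
    mul_nonneg (sin_nonneg_of_nonneg_of_le_pi (by nlinarith) (by linarith))
      (sin_nonneg_of_nonneg_of_le_pi (by nlinarith) upper)
  rw [sub_one_mul, add_one_mul, sin_sub, sin_add] at product_nonneg
  nlinarith [sin_sq_add_cos_sq (m * halfAngle lam), sin_sq_add_cos_sq (halfAngle lam)]

lemma cos_odd_mul_halfAngle_le (hlam : 2 ≤ lam) (j : ℤ) :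
    cos ((2 * j + 1) * halfAngle lam) ≤ cos (halfAngle lam) := by
  have sin_ne : sin ((2 * j + 1 : ℤ) * halfAngle lam) ≠ 0 := fun h => by
    obtain ⟨m, hm⟩ := (sin_int_mul_halfAngle_eq_zero_iff (by lia)).1 h
    rw [mul_assoc] at hm
    lia
  have sin_sq_le := sin_sq_halfAngle_le (by lia) sin_ne
  push_cast at sin_sq_le
  refine le_of_sq_le_sq ?_ (cos_halfAngle_pos hlam).le
  linarith [sin_sq_add_cos_sq (halfAngle lam), sin_sq_add_cos_sq ((2 * j + 1) * halfAngle lam)]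

lemma odd_of_cos_odd_mul_halfAngle_eq_zero (hlam : 0 < lam) {j : ℤ}
    (hj : cos ((2 * j + 1) * halfAngle lam) = 0) : Odd lam := by
  obtain ⟨m, hm⟩ := cos_eq_zero_iff.1 hj
  rw [← two_mul_mul_halfAngle hlam] at hm
  have : (2 * j + 1 : ℝ) = (2 * m + 1) * lam :=
    mul_right_cancel₀ (halfAngle_pos hlam).ne' (by linear_combination hm)
  have : (2 * j + 1 : ℤ) = (2 * m + 1) * lam := by exact_mod_cast this
  have : Odd ((2 * m + 1) * (lam : ℤ)) := this ▸ odd_two_mul_add_one j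
  exact_mod_cast (Int.odd_mul.1 this).2

lemma four_mul_cos_sq_ne (hlam : 2 ≤ lam) (l : ℤ) :
    4 * cos (l * halfAngle lam) ^ 2 ≠ cos (halfAngle lam) ^ 2 := by
  intro h
  have sin_pos : 0 < sin (halfAngle lam) := sin_halfAngle_pos (by lia)
  set X := cos (halfAngle lam) ^ 2
  have X_ge : 1 / 2 ≤ X := half_le_cos_sq_halfAngle hlam
  have X_lt : X < 1 := by nlinarith [sin_sq_add_cos_sq (halfAngle lam)]
  have triple : 4 * cos ((3 * l : ℤ) * halfAngle lam) ^ 2 = X * (X - 3) ^ 2 := by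
    push_cast
    rw [mul_assoc, cos_three_mul, ← h]
    ring
  -- `cos ^ 2 (3 * l * b)` would fall into the gap between `cos ^ 2 b` and `1`.
  have lower : X < cos ((3 * l : ℤ) * halfAngle lam) ^ 2 := by
    have : 0 < X * ((1 - X) * (5 - X)) := by
      have := sub_pos.2 X_lt
      have : 0 < 5 - X := by linarith
      positivity
    linarith
  have upper : cos ((3 * l : ℤ) * halfAngle lam) ^ 2 < 1 := by
    have : 0 < (1 - X) ^ 2 * (4 - X) := by
      have := sub_pos.2 X_lt
      have : 0 < 4 - X := by linarith
      positivity
    linarith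
  have sin_ne : sin ((3 * l : ℤ) * halfAngle lam) ≠ 0 := fun hsin => by
    rw [cos_sq', hsin] at upper
    norm_num at upper
  linarith [sin_sq_halfAngle_le (by lia) sin_ne, sin_sq (halfAngle lam),
    sin_sq ((3 * l : ℤ) * halfAngle lam)]

lemma three_dvd_of_four_mul_cos_sq_eq_one (hlam : 0 < lam) {l : ℤ}
    (hl : 4 * cos (l * halfAngle lam) ^ 2 = 1) : 3 ∣ lam := by
  have sin_sq_eq : sin (l * halfAngle lam) ^ 2 = 3 / 4 := by linarith [sin_sq (l * halfAngle lam)]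
  have sin_ne : sin (l * halfAngle lam) ≠ 0 := fun h => by norm_num [h] at sin_sq_eq
  have sin_triple : sin ((3 * l : ℤ) * halfAngle lam) = 0 := by
    push_cast
    rw [mul_assoc, sin_three_mul]
    linear_combination -4 * sin (l * halfAngle lam) * sin_sq_eq
  rw [Ne, sin_int_mul_halfAngle_eq_zero_iff hlam] at sin_ne
  rw [sin_int_mul_halfAngle_eq_zero_iff hlam] at sin_triple
  by_contra h3
  have coprime : IsCoprime (2 * lam : ℤ) 3 :=
    ((Int.prime_three.coprime_iff_not_dvd).2 (by lia)).symm
  exact sin_ne (coprime.dvd_of_dvd_mul_left sin_triple)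

lemma le_three_of_half_le_sin_halfAngle (h : 1 / 2 ≤ sin (halfAngle lam)) : lam ≤ 3 := by
  by_contra! hlam
  have hlam' : (4 : ℝ) ≤ lam := by exact_mod_cast hlam
  have lt_pi_div_six : halfAngle lam < π / 6 :=
    div_lt_div_of_pos_left pi_pos (by norm_num) (by linarith)
  refine h.not_gt ?_
  rw [← sin_pi_div_six]
  exact sin_lt_sin_of_lt_of_le_pi_div_two (by linarith [pi_pos, halfAngle_pos (by lia : 0 < lam)])
    (by linarith [pi_pos]) lt_pi_div_six

end HalfAngle

/-! ### Zero sums on the dual polygon -/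

/-- The point of the Euclidean unit circle with polar angle `α`. -/
noncomputable def unitVec (α : ℝ) : ℝ × ℝ := (cos α, sin α)

lemma unitVec_add_unitVec (σ δ : ℝ) :
    unitVec (σ + δ) + unitVec (σ - δ) = (2 * cos δ) • unitVec σ := by
  ext
  · simp only [unitVec, Prod.fst_add, Prod.smul_fst, smul_eq_mul, cos_add, cos_sub]
    ring
  · simp only [unitVec, Prod.snd_add, Prod.smul_snd, smul_eq_mul, sin_add, sin_sub]
    ring

lemma unitVec_add (α δ : ℝ) :
    unitVec (α + δ) = cos δ • unitVec α + sin δ • unitVec (α + π / 2) := by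
  ext <;> simp only [unitVec, Prod.smul_mk, Prod.mk_add_mk, smul_eq_mul, cos_add_pi_div_two α,
    sin_add_pi_div_two α, cos_add α δ, sin_add α δ] <;> ring

lemma sin_sub_smul_unitVec (α β w : ℝ) :
    sin (β - α) • unitVec w = sin (β - w) • unitVec α + sin (w - α) • unitVec β := by
  ext <;> simp only [unitVec, Prod.smul_mk, Prod.mk_add_mk, smul_eq_mul, sin_sub] <;> ring

lemma apply_smul_unitVec_add (φ : (ℝ × ℝ) →ₗ[ℝ] ℝ) (r β δ : ℝ) :
    φ (r • unitVec (β + δ)) =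
      cos δ * φ (r • unitVec β) + sin δ * φ (r • unitVec (β + π / 2)) := by
  rw [unitVec_add β δ, smul_add, map_add, smul_comm r (cos δ), smul_comm r (sin δ),
    φ.map_smul (cos δ), φ.map_smul (sin δ), smul_eq_mul, smul_eq_mul]

lemma exists_eq_smul_unitVec (x : ℝ × ℝ) : ∃ ρ w : ℝ, 0 ≤ ρ ∧ x = ρ • unitVec w := by
  refine ⟨‖(⟨x.1, x.2⟩ : ℂ)‖, Complex.arg ⟨x.1, x.2⟩, norm_nonneg _, ?_⟩
  ext
  · exact (Complex.norm_mul_cos_arg ⟨x.1, x.2⟩).symm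
  · exact (Complex.norm_mul_sin_arg ⟨x.1, x.2⟩).symm

lemma unitVec_eq_of_smul_add_smul_eq {α β γ a c : ℝ} (ha : a ≠ 0) (hc : c ≠ 0)
    (h : a • unitVec α + c • unitVec β = (a + c) • unitVec γ) : unitVec α = unitVec β := by
  have h_fst : a * cos α + c * cos β = (a + c) * cos γ := congrArg Prod.fst h
  have h_snd : a * sin α + c * sin β = (a + c) * sin γ := congrArg Prod.snd h
  -- Comparing Euclidean norms gives `a * c * ‖unitVec α - unitVec β‖ ^ 2 = 0`.
  have dist_sq : (cos α - cos β) ^ 2 + (sin α - sin β) ^ 2 = 0 := by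
    refine (mul_eq_zero_iff_left (mul_ne_zero ha hc)).1 ?_
    linear_combination -(a * cos α + c * cos β + (a + c) * cos γ) * h_fst -
      (a * sin α + c * sin β + (a + c) * sin γ) * h_snd +
      a * (a + c) * sin_sq_add_cos_sq α + c * (a + c) * sin_sq_add_cos_sq β -
      (a + c) ^ 2 * sin_sq_add_cos_sq γ
  obtain ⟨cos_eq, sin_eq⟩ := (add_eq_zero_iff_of_nonneg (sq_nonneg _) (sq_nonneg _)).1 dist_sq
  exact Prod.ext (sub_eq_zero.1 (eq_zero_of_pow_eq_zero cos_eq))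
    (sub_eq_zero.1 (eq_zero_of_pow_eq_zero sin_eq))

/-- `z` is a vertex of the regular `2 * lam`-gon inscribed in the unit circle and having two
vertical sides. Up to rotation and scaling this polygon is the dual unit ball of a `lam`-norm. -/
def IsDualVertex (lam : ℕ) (z : ℝ × ℝ) : Prop :=
  ∃ j : ℤ, z = unitVec ((2 * j + 1) * halfAngle lam)

/-- `z` lies on one of the two vertical sides of the polygon with vertices `IsDualVertex lam`. -/
def OnVerticalSide (lam : ℕ) (z : ℝ × ℝ) : Prop :=
  |z.1| = cos (halfAngle lam) ∧ |z.2| ≤ sin (halfAngle lam)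

section ZeroSum

variable {lam : ℕ} {z₁ z₂ z₃ : ℝ × ℝ}

lemma IsDualVertex.sq_add_sq {z : ℝ × ℝ} (hz : IsDualVertex lam z) : z.1 ^ 2 + z.2 ^ 2 = 1 := by
  obtain ⟨j, rfl⟩ := hz
  exact cos_sq_add_sin_sq _

lemma exists_add_eq_smul_unitVec (h₁ : IsDualVertex lam z₁) (h₂ : IsDualVertex lam z₂) :
    ∃ s l : ℤ, z₁ + z₂ = (2 * cos (l * halfAngle lam)) • unitVec (s * halfAngle lam) := by
  obtain ⟨i, rfl⟩ := h₁
  obtain ⟨j, rfl⟩ := h₂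
  refine ⟨i + j + 1, i - j, ?_⟩
  rw [← unitVec_add_unitVec]
  push_cast
  congr 2 <;> ring

lemma three_dvd_of_vertex_vertex_vertex (hlam : 0 < lam) (h₁ : IsDualVertex lam z₁)
    (h₂ : IsDualVertex lam z₂) (h₃ : IsDualVertex lam z₃) (hsum : z₁ + z₂ + z₃ = 0) :
    3 ∣ lam := by
  obtain ⟨s, l, hsl⟩ := exists_add_eq_smul_unitVec h₁ h₂
  have z₃_eq : z₃ = -((2 * cos (l * halfAngle lam)) • unitVec (s * halfAngle lam)) := by
    rw [← hsl, eq_neg_of_add_eq_zero_right hsum]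
  have norm_eq := h₃.sq_add_sq
  simp only [z₃_eq, unitVec, Prod.fst_neg, Prod.snd_neg, Prod.smul_fst, Prod.smul_snd,
    smul_eq_mul] at norm_eq
  refine three_dvd_of_four_mul_cos_sq_eq_one hlam (l := l) ?_
  linear_combination norm_eq - 4 * cos (l * halfAngle lam) ^ 2 *
    sin_sq_add_cos_sq (s * halfAngle lam)

lemma three_dvd_of_vertex_vertex_side (hlam : 2 ≤ lam) (h₁ : IsDualVertex lam z₁)
    (h₂ : IsDualVertex lam z₂) (h₃ : OnVerticalSide lam z₃) (hsum : z₁ + z₂ + z₃ = 0) :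
    3 ∣ lam := by
  obtain ⟨s, l, hsl⟩ := exists_add_eq_smul_unitVec h₁ h₂
  obtain ⟨h₃_fst, h₃_snd⟩ := h₃
  rw [eq_neg_of_add_eq_zero_right hsum, hsl] at h₃_fst h₃_snd
  simp only [unitVec, Prod.fst_neg, Prod.snd_neg, Prod.smul_fst, Prod.smul_snd, smul_eq_mul,
    abs_neg] at h₃_fst h₃_snd
  have fst_sq := sq_eq_sq_iff_abs_eq_abs _ _ |>.2
    (h₃_fst.trans (abs_of_pos (cos_halfAngle_pos hlam)).symm)
  have snd_sq := sq_le_sq.2 (h₃_snd.trans (le_abs_self _))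
  rw [mul_pow, mul_pow] at fst_sq snd_sq
  by_cases hs : sin (s * halfAngle lam) = 0
  · refine absurd ?_ (four_mul_cos_sq_ne hlam l)
    rw [← fst_sq, cos_sq' (s * _), hs]
    ring
  · have gap := sin_sq_halfAngle_le (by lia) hs
    have sin_pos := pow_pos (sin_halfAngle_pos (by lia : 0 < lam)) 2
    have cos_pos := pow_pos (cos_halfAngle_pos hlam) 2
    refine three_dvd_of_four_mul_cos_sq_eq_one (by lia) (l := l) (le_antisymm ?_ ?_)
    · refine le_of_mul_le_mul_right ?_ sin_pos
      nlinarith [sq_nonneg (cos (l * halfAngle lam))]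
    · refine le_of_mul_le_mul_right ?_ cos_pos
      nlinarith [sq_nonneg (cos (l * halfAngle lam)), sin_sq_add_cos_sq (s * halfAngle lam),
        sin_sq_add_cos_sq (halfAngle lam)]

lemma three_dvd_of_side_side (hlam : 2 ≤ lam) (h₁ : OnVerticalSide lam z₁)
    (h₂ : OnVerticalSide lam z₂) (h₃ : IsDualVertex lam z₃ ∨ OnVerticalSide lam z₃)
    (hsum : z₁ + z₂ + z₃ = 0) : 3 ∣ lam := by
  have cos_pos := cos_halfAngle_pos hlam
  have cos_sq_ge := half_le_cos_sq_halfAngle hlam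
  have sum_fst : z₁.1 + z₂.1 + z₃.1 = 0 := congrArg Prod.fst hsum
  have sum_snd : z₁.2 + z₂.2 + z₃.2 = 0 := congrArg Prod.snd hsum
  have fst_lt : |z₃.1| < 2 * cos (halfAngle lam) := by
    rcases h₃ with h₃ | h₃
    · exact abs_lt_of_sq_lt_sq (by nlinarith [h₃.sq_add_sq, sq_nonneg z₃.2]) (by positivity)
    · linarith [h₃.1]
  have fst_eq : z₃.1 = 0 := by
    rcases eq_or_eq_neg_of_abs_eq h₁.1 with e₁ | e₁ <;>
      rcases eq_or_eq_neg_of_abs_eq h₂.1 with e₂ | e₂ <;>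
      linarith [(abs_lt.1 fst_lt).1, (abs_lt.1 fst_lt).2]
  rcases h₃ with h₃ | h₃
  · have half_le : 1 / 2 ≤ sin (halfAngle lam) := by
      have snd_sq : z₃.2 ^ 2 = 1 := by simpa [fst_eq] using h₃.sq_add_sq
      rcases sq_eq_one_iff.1 snd_sq with e | e <;>
        linarith [abs_le.1 h₁.2, abs_le.1 h₂.2]
    obtain ⟨j, rfl⟩ := h₃
    have odd_lam := odd_of_cos_odd_mul_halfAngle_eq_zero (by lia) fst_eq
    have lam_le := le_three_of_half_le_sin_halfAngle half_le
    have : lam = 3 := by grind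
    exact this ▸ dvd_rfl
  · exact absurd h₃.1 (by rw [fst_eq, abs_zero]; exact cos_pos.ne)

theorem three_dvd_of_sum_eq_zero (hlam : 2 ≤ lam)
    (h₁ : IsDualVertex lam z₁ ∨ OnVerticalSide lam z₁)
    (h₂ : IsDualVertex lam z₂ ∨ OnVerticalSide lam z₂)
    (h₃ : IsDualVertex lam z₃ ∨ OnVerticalSide lam z₃) (hsum : z₁ + z₂ + z₃ = 0) :
    3 ∣ lam := by
  have sum_rotate : z₂ + z₃ + z₁ = 0 := by rw [← hsum]; abel
  have sum_rotate' : z₃ + z₁ + z₂ = 0 := by rw [← hsum]; abel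
  rcases h₁ with v₁ | s₁ <;> rcases h₂ with v₂ | s₂ <;> rcases h₃ with v₃ | s₃
  · exact three_dvd_of_vertex_vertex_vertex (by lia) v₁ v₂ v₃ hsum
  · exact three_dvd_of_vertex_vertex_side hlam v₁ v₂ s₃ hsum
  · exact three_dvd_of_vertex_vertex_side hlam v₃ v₁ s₂ sum_rotate'
  · exact three_dvd_of_side_side hlam s₂ s₃ (.inl v₁) sum_rotate
  · exact three_dvd_of_vertex_vertex_side hlam v₂ v₃ s₁ sum_rotate
  · exact three_dvd_of_side_side hlam s₃ s₁ (.inl v₂) sum_rotate'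
  · exact three_dvd_of_side_side hlam s₁ s₂ (.inl v₃) hsum
  · exact three_dvd_of_side_side hlam s₁ s₂ (.inr s₃) hsum

end ZeroSum

/-! ### Norms with polygonal unit ball -/

/-- The Euclidean inner product with `unitVec α`. -/
noncomputable def innerUnitVec (α : ℝ) : (ℝ × ℝ) →ₗ[ℝ] ℝ :=
  cos α • LinearMap.fst ℝ ℝ ℝ + sin α • LinearMap.snd ℝ ℝ ℝ

lemma innerUnitVec_unitVec (α β : ℝ) : innerUnitVec α (unitVec β) = cos (α - β) := by
  simp [innerUnitVec, unitVec, cos_sub]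

lemma innerUnitVec_add_add_eq_zero (α : ℝ) :
    innerUnitVec α + innerUnitVec (α + 2 * π / 3) + innerUnitVec (α + 4 * π / 3) = 0 := by
  have cos_two : cos (2 * π / 3) = -1 / 2 := by
    rw [show 2 * π / 3 = π - π / 3 by ring, cos_pi_sub, cos_pi_div_three]; norm_num
  have cos_four : cos (4 * π / 3) = -1 / 2 := by
    rw [show 4 * π / 3 = π / 3 + π by ring, cos_add_pi, cos_pi_div_three]; norm_num
  have sin_two_add_four : sin (2 * π / 3) + sin (4 * π / 3) = 0 := by
    rw [show 2 * π / 3 = π - π / 3 by ring, show 4 * π / 3 = π / 3 + π by ring, sin_pi_sub,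
      sin_add_pi, add_neg_cancel]
  ext
  · simp only [innerUnitVec, cos_add, sin_add, cos_two, cos_four, LinearMap.comp_apply,
      LinearMap.add_apply, LinearMap.smul_apply, LinearMap.inl_apply, LinearMap.fst_apply,
      LinearMap.snd_apply, LinearMap.zero_apply, smul_eq_mul]
    linear_combination -sin α * sin_two_add_four
  · simp only [innerUnitVec, cos_add, sin_add, cos_two, cos_four, LinearMap.comp_apply,
      LinearMap.add_apply, LinearMap.smul_apply, LinearMap.inr_apply, LinearMap.fst_apply,
      LinearMap.snd_apply, LinearMap.zero_apply, smul_eq_mul]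
    linear_combination cos α * sin_two_add_four

/-- The vertices of `polyVerts lam r θ`, indexed by `ℤ` so that neighbours have consecutive
indices; the indexing is `2 * lam`-periodic. -/
noncomputable def polygonVertex (lam : ℕ) (r θ : ℝ) (k : ℤ) : ℝ × ℝ :=
  r • unitVec (θ + 2 * k * halfAngle lam)

/-- The functional equal to `1` on the side joining `polygonVertex lam r θ k` to the next vertex:
a vertex of the dual unit ball. -/
noncomputable def sideFunctional (lam : ℕ) (r θ : ℝ) (k : ℤ) : (ℝ × ℝ) →ₗ[ℝ] ℝ :=
  (r * cos (halfAngle lam))⁻¹ • innerUnitVec (θ + (2 * k + 1) * halfAngle lam)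

/-- The coordinates of `φ` in the basis dual to `r • unitVec β`, `r • unitVec (β + π / 2)`, scaled
by `cos (halfAngle lam)` so that side functionals land on the Euclidean unit circle. -/
noncomputable def dualCoords (lam : ℕ) (r β : ℝ) (φ : (ℝ × ℝ) →ₗ[ℝ] ℝ) : ℝ × ℝ :=
  cos (halfAngle lam) • (φ (r • unitVec β), φ (r • unitVec (β + π / 2)))

lemma dualCoords_add (lam : ℕ) (r β : ℝ) (φ ψ : (ℝ × ℝ) →ₗ[ℝ] ℝ) :
    dualCoords lam r β (φ + ψ) = dualCoords lam r β φ + dualCoords lam r β ψ := by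
  ext <;> simp [dualCoords, mul_add]

lemma dualCoords_zero (lam : ℕ) (r β : ℝ) : dualCoords lam r β 0 = 0 := by
  simp [dualCoords]

lemma sum_sideFunctional_eq_zero {μ : ℕ} (hμ : 0 < μ) (r θ : ℝ) :
    ∑ i : Fin 3, sideFunctional (3 * μ) r θ (2 * μ * (i : ℕ)) = 0 := by
  have third_turn : 4 * (μ : ℝ) * halfAngle (3 * μ) = 2 * π / 3 := by
    have half_turn := two_mul_mul_halfAngle (lam := 3 * μ) (by positivity)
    push_cast at half_turn
    linarith
  have angle_eq (i : Fin 3) : θ + (2 * (2 * μ * (i : ℕ) : ℤ) + 1) * halfAngle (3 * μ) =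
      θ + halfAngle (3 * μ) + (i : ℕ) * (2 * π / 3) := by
    push_cast
    linear_combination ((i : ℕ) : ℝ) * third_turn
  simp only [sideFunctional, angle_eq, ← Finset.smul_sum]
  refine smul_eq_zero_of_right _ ?_
  rw [Fin.sum_univ_three, ← innerUnitVec_add_add_eq_zero (θ + halfAngle (3 * μ))]
  congr 3
  · simp
  · simp
  · norm_num
    ring

lemma range_polyVerts {lam : ℕ} (hlam : 0 < lam) (r θ : ℝ) :
    Set.range (polyVerts lam r θ) = Set.range (polygonVertex lam r θ) := by
  have polyVerts_eq (k : Fin (2 * lam)) : polyVerts lam r θ k = polygonVertex lam r θ k := by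
    have angle_eq : θ + (k : ℕ) * π / lam = θ + 2 * ((k : ℕ) : ℤ) * halfAngle lam := by
      rw [halfAngle, Int.cast_natCast]
      field_simp
    rw [polyVerts, angle_eq]
    rfl
  refine Set.Subset.antisymm ?_ ?_
  · rintro _ ⟨k, rfl⟩
    exact ⟨k, (polyVerts_eq k).symm⟩
  · rintro _ ⟨k, rfl⟩
    have emod_nonneg : 0 ≤ k % (2 * lam) := Int.emod_nonneg k (by lia)
    have emod_lt : k % (2 * lam) < 2 * lam := Int.emod_lt_of_pos k (by lia)
    refine ⟨⟨(k % (2 * lam)).toNat, by lia⟩, ?_⟩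
    have angle_eq : θ + 2 * k * halfAngle lam = θ + 2 * (k % (2 * lam) : ℤ) * halfAngle lam +
        (k / (2 * lam) : ℤ) * (2 * π) := by
      conv_lhs => rw [← Int.emod_add_mul_ediv k (2 * lam)]
      push_cast
      linear_combination 2 * ((k / (2 * lam) : ℤ) : ℝ) * two_mul_mul_halfAngle hlam
    rw [polyVerts_eq, Int.toNat_of_nonneg emod_nonneg, polygonVertex, polygonVertex, angle_eq,
      unitVec, unitVec, cos_add_int_mul_two_pi, sin_add_int_mul_two_pi]

section Polygon

variable {lam : ℕ} {r θ : ℝ}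

local notation "v" => polygonVertex lam r θ

lemma cos_mul_sideFunctional (hlam : 2 ≤ lam) (hr : 0 < r) (k : ℤ) (α : ℝ) :
    cos (halfAngle lam) * sideFunctional lam r θ k (r • unitVec α) =
      cos (θ + (2 * k + 1) * halfAngle lam - α) := by
  have := hr.ne'
  have := (cos_halfAngle_pos hlam).ne'
  rw [sideFunctional, LinearMap.smul_apply, map_smul, innerUnitVec_unitVec, smul_eq_mul,
    smul_eq_mul]
  field_simp

lemma cos_mul_sideFunctional_vertex (hlam : 2 ≤ lam) (hr : 0 < r) (k j : ℤ) :
    cos (halfAngle lam) * sideFunctional lam r θ k (v j) =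
      cos ((2 * (k - j : ℤ) + 1) * halfAngle lam) := by
  rw [polygonVertex, cos_mul_sideFunctional hlam hr]
  congr 1
  push_cast
  ring

lemma sideFunctional_vertex (hlam : 2 ≤ lam) (hr : 0 < r) (k : ℤ) :
    sideFunctional lam r θ k (v k) = 1 := by
  refine mul_left_cancel₀ (cos_halfAngle_pos hlam).ne' ?_
  rw [cos_mul_sideFunctional_vertex hlam hr, sub_self, Int.cast_zero, mul_zero, zero_add, one_mul,
    mul_one]

lemma sideFunctional_vertex_add_one (hlam : 2 ≤ lam) (hr : 0 < r) (k : ℤ) :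
    sideFunctional lam r θ k (v (k + 1)) = 1 := by
  refine mul_left_cancel₀ (cos_halfAngle_pos hlam).ne' ?_
  rw [cos_mul_sideFunctional_vertex hlam hr, ← cos_neg, mul_one]
  congr 1
  push_cast
  ring

lemma sideFunctional_vertex_le_one (hlam : 2 ≤ lam) (hr : 0 < r) (k j : ℤ) :
    sideFunctional lam r θ k (v j) ≤ 1 := by
  refine le_of_mul_le_mul_left ?_ (cos_halfAngle_pos hlam)
  rw [cos_mul_sideFunctional_vertex hlam hr, mul_one]
  exact cos_odd_mul_halfAngle_le hlam _

lemma smul_unitVec_eq_smul_vertex_add_smul_vertex (hlam : 2 ≤ lam) (hr : 0 < r) (k : ℤ) (ρ w : ℝ) :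
    ρ • unitVec w =
      (ρ / (r * sin (2 * halfAngle lam)) * sin (θ + 2 * (k + 1) * halfAngle lam - w)) • v k +
      (ρ / (r * sin (2 * halfAngle lam)) * sin (w - (θ + 2 * k * halfAngle lam))) • v (k + 1) := by
  have r_ne := hr.ne'
  have sin_ne := (sin_two_mul_halfAngle_pos hlam).ne'
  have combination := sin_sub_smul_unitVec (θ + 2 * k * halfAngle lam)
    (θ + 2 * (k + 1) * halfAngle lam) w
  rw [show θ + 2 * (k + 1) * halfAngle lam - (θ + 2 * k * halfAngle lam) = 2 * halfAngle lam by
    ring] at combination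
  rw [mul_smul, mul_smul, ← smul_add, polygonVertex, polygonVertex, Int.cast_add, Int.cast_one,
    smul_comm _ r, smul_comm _ r, ← smul_add, ← combination, smul_smul, smul_smul]
  congr 1
  field_simp

variable (θ) in
lemma exists_eq_smul_vertex_add_smul_vertex (hlam : 2 ≤ lam) (hr : 0 < r) (k : ℤ) (x : ℝ × ℝ) :
    ∃ s t : ℝ, x = s • v k + t • v (k + 1) := by
  obtain ⟨ρ, w, -, rfl⟩ := exists_eq_smul_unitVec x
  exact ⟨_, _, smul_unitVec_eq_smul_vertex_add_smul_vertex hlam hr k ρ w⟩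

variable (θ) in
lemma exists_eq_smul_vertex_add_smul_vertex_nonneg (hlam : 2 ≤ lam) (hr : 0 < r) (x : ℝ × ℝ) :
    ∃ (k : ℤ) (s t : ℝ), 0 ≤ s ∧ 0 ≤ t ∧ x = s • v k + t • v (k + 1) := by
  obtain ⟨ρ, w, ρ_nonneg, rfl⟩ := exists_eq_smul_unitVec x
  have b_pos : 0 < 2 * halfAngle lam := by linarith [halfAngle_pos (by lia : 0 < lam)]
  have scale_nonneg : 0 ≤ ρ / (r * sin (2 * halfAngle lam)) :=
    div_nonneg ρ_nonneg (mul_pos hr (sin_two_mul_halfAngle_pos hlam)).le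
  have b_le := halfAngle_le_pi_div_four hlam
  set k := ⌊(w - θ) / (2 * halfAngle lam)⌋
  have lower : k * (2 * halfAngle lam) ≤ w - θ := (le_div_iff₀ b_pos).1 (Int.floor_le _)
  have upper : w - θ < (k + 1) * (2 * halfAngle lam) :=
    (div_lt_iff₀ b_pos).1 (Int.lt_floor_add_one _)
  refine ⟨k, _, _, mul_nonneg scale_nonneg ?_, mul_nonneg scale_nonneg ?_,
    smul_unitVec_eq_smul_vertex_add_smul_vertex hlam hr k ρ w⟩ <;>
  exact sin_nonneg_of_nonneg_of_le_pi (by linarith) (by linarith [pi_pos])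

lemma eq_sideFunctional {φ : (ℝ × ℝ) →ₗ[ℝ] ℝ} (hlam : 2 ≤ lam) (hr : 0 < r) {k : ℤ}
    (h₀ : φ (v k) = 1) (h₁ : φ (v (k + 1)) = 1) : φ = sideFunctional lam r θ k := by
  refine LinearMap.ext fun x => ?_
  obtain ⟨s, t, rfl⟩ := exists_eq_smul_vertex_add_smul_vertex θ hlam hr k x
  simp only [map_add, map_smul, h₀, h₁, sideFunctional_vertex hlam hr,
    sideFunctional_vertex_add_one hlam hr]

lemma isDualVertex_dualCoords (hlam : 2 ≤ lam) (hr : 0 < r) (k j : ℤ) :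
    IsDualVertex lam
      (dualCoords lam r (θ + 2 * k * halfAngle lam) (sideFunctional lam r θ j)) := by
  refine ⟨j - k, ?_⟩
  rw [dualCoords, Prod.smul_mk, smul_eq_mul, smul_eq_mul, cos_mul_sideFunctional hlam hr,
    cos_mul_sideFunctional hlam hr, unitVec, ← cos_sub_pi_div_two]
  push_cast
  congr 2 <;> ring

lemma apply_vertex_add_one (φ : (ℝ × ℝ) →ₗ[ℝ] ℝ) (k : ℤ) :
    φ (v (k + 1)) = cos (2 * halfAngle lam) * φ (v k) +
      sin (2 * halfAngle lam) * φ (r • unitVec (θ + 2 * k * halfAngle lam + π / 2)) := by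
  rw [polygonVertex, polygonVertex, ← apply_smul_unitVec_add]
  congr 3
  push_cast
  ring

lemma apply_vertex_sub_one (φ : (ℝ × ℝ) →ₗ[ℝ] ℝ) (k : ℤ) :
    φ (v (k - 1)) = cos (2 * halfAngle lam) * φ (v k) -
      sin (2 * halfAngle lam) * φ (r • unitVec (θ + 2 * k * halfAngle lam + π / 2)) := by
  rw [polygonVertex, polygonVertex, sub_eq_add_neg (cos _ * _), ← neg_mul, ← sin_neg, ← cos_neg,
    ← apply_smul_unitVec_add]
  congr 3
  push_cast
  ring

/-- `N` is a norm whose unit ball is the regular `2 * lam`-gon with vertices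
`polygonVertex lam r θ`. -/
structure HasPolygonalBall (lam : ℕ) (r θ : ℝ) (N : ℝ × ℝ → ℝ) : Prop where
  two_le : 2 ≤ lam
  radius_pos : 0 < r
  isNormOn : IsNormOn N
  ball_eq : {x | N x ≤ 1} = convexHull ℝ (Set.range (polygonVertex lam r θ))

lemma IsLambdaNorm.exists_hasPolygonalBall {lam : ℕ} {N : ℝ × ℝ → ℝ} (hlam : 2 ≤ lam)
    (hN : IsLambdaNorm lam N) : ∃ r θ, HasPolygonalBall lam r θ N := by
  obtain ⟨norm, r, r_pos, θ, ball_eq⟩ := hN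
  exact ⟨r, θ, hlam, r_pos, norm, by rw [ball_eq, range_polyVerts (by lia : 0 < lam)]⟩

namespace HasPolygonalBall

variable {N : ℝ × ℝ → ℝ} {φ : (ℝ × ℝ) →ₗ[ℝ] ℝ} {x y : ℝ × ℝ}

lemma map_vertex_le_one (h : HasPolygonalBall lam r θ N) (k : ℤ) : N (v k) ≤ 1 :=
  h.ball_eq.symm.subset (subset_convexHull ℝ _ ⟨k, rfl⟩)

lemma apply_le_of_forall_vertex (h : HasPolygonalBall lam r θ N) (hφ : ∀ k, φ (v k) ≤ 1)
    (x : ℝ × ℝ) : φ x ≤ N x := by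
  have le_one_of_ball {y : ℝ × ℝ} (hy : N y ≤ 1) : φ y ≤ 1 :=
    convexHull_min (Set.range_subset_iff.2 hφ) (convex_halfSpace_le φ.isLinear 1)
      (h.ball_eq.subset hy)
  rcases (h.isNormOn.nonneg x).eq_or_lt with N_eq | N_pos
  · rw [h.isNormOn.2.2 x N_eq.symm, _root_.map_zero, h.isNormOn.map_zero]
  · have unit_ball : N ((N x)⁻¹ • x) ≤ 1 := by
      rw [h.isNormOn.map_smul_of_pos _ (inv_pos.2 N_pos), inv_mul_cancel₀ N_pos.ne']
    have scaled := le_one_of_ball unit_ball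
    rwa [map_smul, smul_eq_mul, inv_mul_le_iff₀ N_pos, mul_one] at scaled

lemma sideFunctional_apply_le (h : HasPolygonalBall lam r θ N) (k : ℤ) (x : ℝ × ℝ) :
    sideFunctional lam r θ k x ≤ N x :=
  h.apply_le_of_forall_vertex (sideFunctional_vertex_le_one h.two_le h.radius_pos k) x

lemma isNormingN_sideFunctional (h : HasPolygonalBall lam r θ N) (k : ℤ) {s t : ℝ} (hs : 0 ≤ s)
    (ht : 0 ≤ t) : IsNormingN N (sideFunctional lam r θ k) (s • v k + t • v (k + 1)) := by
  refine h.isNormOn.isNormingN_of_le (h.sideFunctional_apply_le k)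
    ((h.sideFunctional_apply_le k _).antisymm ?_)
  calc N (s • v k + t • v (k + 1)) ≤ s * N (v k) + t * N (v (k + 1)) := by
        simpa only [h.isNormOn.2.1, abs_of_nonneg hs, abs_of_nonneg ht] using
          h.isNormOn.1 (s • v k) (t • v (k + 1))
    _ ≤ s * 1 + t * 1 := by gcongr <;> exact h.map_vertex_le_one _
    _ = sideFunctional lam r θ k (s • v k + t • v (k + 1)) := by
        simp only [map_add, map_smul, smul_eq_mul, sideFunctional_vertex h.two_le h.radius_pos,
          sideFunctional_vertex_add_one h.two_le h.radius_pos]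

lemma map_smul_add_smul (h : HasPolygonalBall lam r θ N) (k : ℤ) {s t : ℝ} (hs : 0 ≤ s)
    (ht : 0 ≤ t) : N (s • v k + t • v (k + 1)) = s + t := by
  rw [← (h.isNormingN_sideFunctional k hs ht).2]
  simp only [map_add, map_smul, smul_eq_mul, sideFunctional_vertex h.two_le h.radius_pos,
    sideFunctional_vertex_add_one h.two_le h.radius_pos, mul_one]

lemma map_vertex (h : HasPolygonalBall lam r θ N) (k : ℤ) : N (v k) = 1 := by
  simpa using h.map_smul_add_smul k zero_le_one le_rfl

lemma eq_sideFunctional_or_eq_smul_vertex (h : HasPolygonalBall lam r θ N)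
    (hx : IsNormingN N φ x) : (∃ k, φ = sideFunctional lam r θ k) ∨ ∃ k, x = N x • v k := by
  obtain ⟨k, s, t, hs, ht, rfl⟩ :=
    exists_eq_smul_vertex_add_smul_vertex_nonneg θ h.two_le h.radius_pos x
  have N_eq := h.map_smul_add_smul k hs ht
  rcases hs.eq_or_lt with rfl | s_pos
  · exact .inr ⟨k + 1, by rw [N_eq]; simp⟩
  rcases ht.eq_or_lt with rfl | t_pos
  · exact .inr ⟨k, by rw [N_eq]; simp⟩
  have le_one (j : ℤ) : φ (v j) ≤ 1 := (hx.apply_le _).trans_eq (h.map_vertex j)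
  have apply_eq : s * φ (v k) + t * φ (v (k + 1)) = s + t := by
    simpa only [map_add, map_smul, smul_eq_mul, N_eq] using hx.2
  exact .inl ⟨k, eq_sideFunctional h.two_le h.radius_pos
    ((le_one k).antisymm (by nlinarith [le_one (k + 1)]))
    ((le_one (k + 1)).antisymm (by nlinarith [le_one k]))⟩

lemma eq_sideFunctional_or_sub_eq_smul_vertex (h : HasPolygonalBall lam r θ N)
    (hx : IsNormingN N φ x) (hy : IsNormingN N φ y) :
    (∃ k, φ = sideFunctional lam r θ k) ∨ ∃ k, x - y = (N x - N y) • v k := by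
  have N_add : N (x + y) = N x + N y :=
    (h.isNormOn.1 x y).antisymm <| by simpa [← hx.2, ← hy.2] using hx.apply_le (x + y)
  have norming_add : IsNormingN N φ (x + y) := ⟨hx.1, by rw [map_add, hx.2, hy.2, N_add]⟩
  rcases h.eq_sideFunctional_or_eq_smul_vertex hx with side | ⟨i, hi⟩
  · exact .inl side
  rcases h.eq_sideFunctional_or_eq_smul_vertex hy with side | ⟨j, hj⟩
  · exact .inl side
  rcases h.eq_sideFunctional_or_eq_smul_vertex norming_add with side | ⟨m, hm⟩
  · exact .inl side
  right
  rcases eq_or_ne (N x) 0 with hNx | hNx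
  · exact ⟨j, by rw [h.isNormOn.2.2 x hNx, h.isNormOn.map_zero, zero_sub, zero_sub, neg_smul, ← hj]⟩
  rcases eq_or_ne (N y) 0 with hNy | hNy
  · exact ⟨i, by rw [h.isNormOn.2.2 y hNy, h.isNormOn.map_zero, sub_zero, sub_zero, ← hi]⟩
  have unitVec_combination : N x • unitVec (θ + 2 * i * halfAngle lam) +
      N y • unitVec (θ + 2 * j * halfAngle lam) =
      (N x + N y) • unitVec (θ + 2 * m * halfAngle lam) := by
    refine smul_right_injective _ h.radius_pos.ne' ?_
    simpa only [smul_add, smul_comm r, ← N_add] using hi ▸ hj ▸ hm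
  have v_eq : v i = v j :=
    congrArg (r • ·) (unitVec_eq_of_smul_add_smul_eq hNx hNy unitVec_combination)
  exact ⟨i, by rw [sub_smul, ← hi, v_eq, ← hj]⟩

lemma onVerticalSide_dualCoords (h : HasPolygonalBall lam r θ N) (hφ : ∀ y, |φ y| ≤ N y) {k : ℤ}
    (hk : |φ (v k)| = 1) :
    OnVerticalSide lam (dualCoords lam r (θ + 2 * k * halfAngle lam) φ) := by
  have cos_pos := cos_halfAngle_pos h.two_le
  have sin_pos : 0 < sin (halfAngle lam) := sin_halfAngle_pos (by linarith [h.two_le])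
  refine ⟨show |cos (halfAngle lam) * φ (v k)| = _ by rw [abs_mul, hk, abs_of_pos cos_pos, mul_one],
    ?_⟩
  set f := φ (r • unitVec (θ + 2 * k * halfAngle lam + π / 2))
  change |cos (halfAngle lam) * f| ≤ sin (halfAngle lam)
  have next : |cos (2 * halfAngle lam) * φ (v k) + sin (2 * halfAngle lam) * f| ≤ 1 := by
    rw [← apply_vertex_add_one]
    exact (hφ _).trans (h.map_vertex_le_one _)
  have prev : |cos (2 * halfAngle lam) * φ (v k) - sin (2 * halfAngle lam) * f| ≤ 1 := by
    rw [← apply_vertex_sub_one]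
    exact (hφ _).trans (h.map_vertex_le_one _)
  have sum_le : |cos (2 * halfAngle lam)| + |sin (2 * halfAngle lam) * f| ≤ 1 := by
    rw [← mul_one |cos _|, ← hk, ← abs_mul]
    grind
  have sin_mul : |sin (2 * halfAngle lam) * f| =
      2 * sin (halfAngle lam) * |cos (halfAngle lam) * f| := by
    rw [sin_two_mul, mul_assoc, abs_mul, abs_of_pos (by positivity)]
  refine le_of_mul_le_mul_left ?_ (by positivity : 0 < 2 * sin (halfAngle lam))
  rw [sin_mul, cos_two_mul'] at sum_le
  linarith [le_abs_self (cos (halfAngle lam) ^ 2 - sin (halfAngle lam) ^ 2),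
    sin_sq_add_cos_sq (halfAngle lam)]

/-- A functional that is not a side functional attains its norm only along one vertex direction,
which must then be that of `p - q`. -/
lemma exists_common_vertex {ι : Type*} (h : HasPolygonalBall lam r θ N)
    {φ : ι → (ℝ × ℝ) →ₗ[ℝ] ℝ} {x : ι → ℝ × ℝ} {p q : ℝ × ℝ} (hpq : p ≠ q)
    (hp : ∀ i, IsNormingN N (φ i) (p - x i)) (hq : ∀ i, IsNormingN N (φ i) (q - x i)) :
    ∃ k, ∀ i, (∃ j, φ i = sideFunctional lam r θ j) ∨ |φ i (v k)| = 1 := by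
  have N_ne : N (p - q) ≠ 0 := fun h0 => hpq (sub_eq_zero.1 (h.isNormOn.2.2 _ h0))
  have side_or (i : ι) : (∃ j, φ i = sideFunctional lam r θ j) ∨
      |φ i (p - q)| = N (p - q) ∧ ∃ (k : ℤ) (c : ℝ), p - q = c • v k := by
    refine (h.eq_sideFunctional_or_sub_eq_smul_vertex (hp i) (hq i)).imp_right fun ⟨k, hk⟩ => ?_
    rw [sub_sub_sub_cancel_right] at hk
    refine ⟨?_, k, _, hk⟩
    rw [← sub_sub_sub_cancel_right p q (x i), map_sub, (hp i).2, (hq i).2,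
      sub_sub_sub_cancel_right, hk, h.isNormOn.2.1, h.map_vertex, mul_one]
  by_cases all_side : ∀ i, ∃ j, φ i = sideFunctional lam r θ j
  · exact ⟨0, fun i => .inl (all_side i)⟩
  obtain ⟨i₀, hi₀⟩ := not_forall.1 all_side
  obtain ⟨-, k, c, hkc⟩ := (side_or i₀).resolve_left hi₀
  refine ⟨k, fun i => (side_or i).imp_right fun ⟨attains, _⟩ => ?_⟩
  rw [hkc, h.isNormOn.2.1, h.map_vertex, mul_one] at N_ne attains
  rw [map_smul, smul_eq_mul, abs_mul] at attains
  exact mul_left_cancel₀ N_ne (attains.trans (mul_one _).symm)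

theorem ftSetN_subsingleton (h : HasPolygonalBall lam r θ N) (h3 : ¬ 3 ∣ lam)
    (x : Fin 3 → ℝ × ℝ) : (ftSetN N x).Subsingleton := by
  intro p hp q hq
  by_contra hpq
  obtain ⟨φ, sum_eq, norms_p⟩ := h.isNormOn.exists_isNormingN_of_mem_ftSetN hp
  obtain ⟨k, hk⟩ := h.exists_common_vertex hpq norms_p (IsNormingN.of_mem_ftSetN sum_eq norms_p hq)
  let z i := dualCoords lam r (θ + 2 * k * halfAngle lam) (φ i)
  have hz (i : Fin 3) : IsDualVertex lam (z i) ∨ OnVerticalSide lam (z i) := by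
    refine (hk i).imp (fun ⟨j, hj⟩ => ?_) (h.onVerticalSide_dualCoords (norms_p i).1)
    simpa only [z, hj] using isDualVertex_dualCoords h.two_le h.radius_pos k j
  refine h3 (three_dvd_of_sum_eq_zero h.two_le (hz 0) (hz 1) (hz 2) ?_)
  rw [← dualCoords_add, ← dualCoords_add, ← Fin.sum_univ_three, sum_eq, dualCoords_zero]

lemma exists_isNormingN_sideFunctional_add (h : HasPolygonalBall lam r θ N) (k : ℤ)
    (d : ℝ × ℝ) : ∃ y, IsNormingN N (sideFunctional lam r θ k) y ∧
      IsNormingN N (sideFunctional lam r θ k) (y + d) := by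
  obtain ⟨s, t, rfl⟩ := exists_eq_smul_vertex_add_smul_vertex θ h.two_le h.radius_pos k d
  refine ⟨|s| • v k + |t| • v (k + 1),
    h.isNormingN_sideFunctional k (abs_nonneg s) (abs_nonneg t), ?_⟩
  rw [add_add_add_comm, ← add_smul, ← add_smul]
  exact h.isNormingN_sideFunctional k (by linarith [neg_abs_le s]) (by linarith [neg_abs_le t])

theorem exists_ftSetN_nontrivial (h : HasPolygonalBall lam r θ N) (h3 : 3 ∣ lam) :
    ∃ x : Fin 3 → ℝ × ℝ, (ftSetN N x).Nontrivial := by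
  obtain ⟨μ, rfl⟩ := h3
  have sum_eq := sum_sideFunctional_eq_zero (by linarith [h.two_le] : 0 < μ) r θ
  choose y norms_zero norms_d using fun i : Fin 3 =>
    h.exists_isNormingN_sideFunctional_add (2 * μ * (i : ℕ)) (1, 0)
  refine ⟨fun i => -y i, (1, 0), ?_, 0, ?_, by simp⟩
  · exact IsNormingN.mem_ftSetN sum_eq fun i => by
      simpa only [sub_neg_eq_add, add_comm] using norms_d i
  · exact IsNormingN.mem_ftSetN sum_eq fun i => by
      simpa only [zero_sub, neg_neg] using norms_zero i

end HasPolygonalBall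

end Polygon

/-- In a λ-normed plane, the Fermat–Torricelli set is a singleton for every triple of
points if and only if λ is not divisible by 3. -/
theorem lambda_plane_ft_singleton_iff
    (lam : ℕ) (hlam : 2 ≤ lam)
    (N : ℝ × ℝ → ℝ) (hN : IsLambdaNorm lam N) :
    (∀ x₁ x₂ x₃ : ℝ × ℝ, ∃ p : ℝ × ℝ, ftSetN N ![x₁, x₂, x₃] = {p}) ↔ ¬ 3 ∣ lam := by
  obtain ⟨r, θ, h⟩ := hN.exists_hasPolygonalBall hlam
  constructor
  · intro singleton h3
    obtain ⟨x, nontrivial⟩ := h.exists_ftSetN_nontrivial h3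
    obtain ⟨p, hp⟩ := singleton (x 0) (x 1) (x 2)
    rw [show ![x 0, x 1, x 2] = x from FinVec.etaExpand_eq x] at hp
    exact nontrivial.ne_singleton hp
  · exact fun h3 x₁ x₂ x₃ => Set.exists_eq_singleton_iff_nonempty_subsingleton.2
      ⟨h.isNormOn.ftSetN_nonempty _, h.ftSetN_subsingleton h3 _⟩
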